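/- Under the 2-group SBM with observation errors, suppose q ∈ (0,1) and β ∈ (0,1). Then |β̂_b − β| = O_P(n^{−1}) and |β̂_g − (β − γ_g/√n)| = O_P(n^{−1}) for g = 1, 2. Consequently, γ̂_g = √n(β̂_b − β̂_g) converges in probability to γ_g for g = 1, 2, q̂ = û_{1,b}/(1 − β̂_b) converges in probability to q, and μ̂_g = √n(û_{1,g}/(1 − β̂_g) − û_{1,b}/(1 − β̂_b)) converges in probability to μ_g for g = 1, 2. -/

import Mathlib

/-!
STATEMENT 12: Under the 2-group SBM with observation errors,
|β̂_b − β| = O_P(n⁻¹) and |β̂_g − (β − γ_g/√n)| = O_P(n⁻¹) for g = 1,2;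
consequently γ̂_g →ᵖ γ_g, q̂ = û₁,b/(1−β̂_b) →ᵖ q and μ̂_g →ᵖ μ_g.
`O_P(n⁻¹)` is formalized as: for every ε > 0 there is C > 0 such that
eventually P(n·|…| > C) ≤ ε.  The model hypothesis holds for all large n.
-/

open MeasureTheory ProbabilityTheory Filter Finset

noncomputable section

/-- Mass of a label configuration: i.i.d. labels, `true` (minority) w.p. κ. -/
def labelMass (κ : ℝ) {n : ℕ} (l : Fin n → Bool) : ℝ :=
  ∏ i, (if l i then κ else 1 - κ)

/-- Conditional mass of an adjacency configuration given labels: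
independent Bernoulli edges with success probability `B (l i) (l j)`, i < j. -/
def edgeMass {n : ℕ} (B : Bool → Bool → ℝ) (l : Fin n → Bool)
    (a : Fin n → Fin n → Bool) : ℝ :=
  ∏ p ∈ Finset.univ.filter (fun p : Fin n × Fin n => p.1 < p.2),
    (if a p.1 p.2 then B (l p.1) (l p.2) else 1 - B (l p.1) (l p.2))

/-- Conditional mass of an observed network `y` given the construct network
`a` and the labels: each present edge of `a` is kept independently with
probability `1 − βm (l i) (l j)` (type II error rate `βm`), and no edges are
added. -/
def obsMass {n : ℕ} (βm : Bool → Bool → ℝ) (l : Fin n → Bool)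
    (a y : Fin n → Fin n → Bool) : ℝ :=
  ∏ p ∈ Finset.univ.filter (fun p : Fin n × Fin n => p.1 < p.2),
    (if a p.1 p.2 then
      (if y p.1 p.2 then 1 - βm (l p.1) (l p.2) else βm (l p.1) (l p.2))
     else (if y p.1 p.2 then 0 else 1))

/-- The symmetric 2×2 matrix with within-group values `x₁` (group 1 = `true`),
`x₂` (group 2 = `false`) and between-group value `xb`. -/
def sbmB (x₁ x₂ xb : ℝ) : Bool → Bool → ℝ :=
  fun x y => if x then (if y then x₁ else xb) else (if y then xb else x₂)

/-- `(P, c, A, Y, Y')` is a 2-group SBM with connectivity matrix `B` and two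
conditionally independent noisy replicates `Y`, `Y'` with group-dependent
type II error rates `βm`.  The joint law is specified by its probability
mass function. -/
structure IsObsSBM {Ω : Type*} [MeasurableSpace Ω] (P : Measure Ω) (n : ℕ)
    (B βm : Bool → Bool → ℝ) (κ : ℝ)
    (c : Ω → Fin n → Bool) (A Y Y' : Ω → Fin n → Fin n → Bool) : Prop where
  isProb : IsProbabilityMeasure P
  symmA : ∀ ω i j, A ω i j = A ω j i
  looplessA : ∀ ω i, A ω i i = false
  symmY : ∀ ω i j, Y ω i j = Y ω j i
  looplessY : ∀ ω i, Y ω i i = false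
  symmY' : ∀ ω i j, Y' ω i j = Y' ω j i
  looplessY' : ∀ ω i, Y' ω i i = false
  law : ∀ (l : Fin n → Bool) (a y y' : Fin n → Fin n → Bool),
    (∀ i j, a i j = a j i) → (∀ i, a i i = false) →
    (∀ i j, y i j = y j i) → (∀ i, y i i = false) →
    (∀ i j, y' i j = y' j i) → (∀ i, y' i i = false) →
    P {ω | c ω = l ∧ A ω = a ∧ Y ω = y ∧ Y' ω = y'}
      = ENNReal.ofReal (labelMass κ l * edgeMass B l a *
          obsMass βm l a y * obsMass βm l a y')

/-- Number of unordered pairs `i < j` selected by `sel`. -/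
def pairCard {n : ℕ} (sel : Fin n → Fin n → Bool) : ℝ :=
  ((Finset.univ.filter
      (fun p : Fin n × Fin n => p.1 < p.2 ∧ sel p.1 p.2 = true)).card : ℝ)

/-- Pairs within group 1. -/
def within1 {n : ℕ} (c : Fin n → Bool) : Fin n → Fin n → Bool :=
  fun i j => c i && c j

/-- Pairs within group 2. -/
def within2 {n : ℕ} (c : Fin n → Bool) : Fin n → Fin n → Bool :=
  fun i j => !(c i) && !(c j)

/-- Between-group pairs. -/
def between {n : ℕ} (c : Fin n → Bool) : Fin n → Fin n → Bool :=
  fun i j => c i != c j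

/-- `û₁`: observed edge density over the pairs selected by `cls`. -/
def u1hat {n : ℕ} (cls y : Fin n → Fin n → Bool) : ℝ :=
  pairCard (fun i j => cls i j && y i j) / pairCard cls

/-- `û₂`: half the disagreement rate of the two replicates over the pairs
selected by `cls`. -/
def u2hat {n : ℕ} (cls y y' : Fin n → Fin n → Bool) : ℝ :=
  pairCard (fun i j => cls i j && (y i j != y' i j)) / (2 * pairCard cls)

/-- Estimator of the type II error rate over the pairs selected by `cls`. -/
def betaHat {n : ℕ} (cls y y' : Fin n → Fin n → Bool) : ℝ :=
  u2hat cls y y' / u1hat cls y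

/-- `γ̂₁ = √n (β̂_b − β̂₁)`. -/
def gammaHat1 {n : ℕ} (c : Fin n → Bool) (y y' : Fin n → Fin n → Bool) : ℝ :=
  Real.sqrt n * (betaHat (between c) y y' - betaHat (within1 c) y y')

/-- `γ̂₂ = √n (β̂_b − β̂₂)`. -/
def gammaHat2 {n : ℕ} (c : Fin n → Bool) (y y' : Fin n → Fin n → Bool) : ℝ :=
  Real.sqrt n * (betaHat (between c) y y' - betaHat (within2 c) y y')

/-- `μ̂₁ = √n (û₁,₁/(1−β̂₁) − û₁,b/(1−β̂_b))`. -/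
def muHat1 {n : ℕ} (c : Fin n → Bool) (y y' : Fin n → Fin n → Bool) : ℝ :=
  Real.sqrt n * (u1hat (within1 c) y / (1 - betaHat (within1 c) y y')
    - u1hat (between c) y / (1 - betaHat (between c) y y'))

/-- `μ̂₂ = √n (û₁,₂/(1−β̂₂) − û₁,b/(1−β̂_b))`. -/
def muHat2 {n : ℕ} (c : Fin n → Bool) (y y' : Fin n → Fin n → Bool) : ℝ :=
  Real.sqrt n * (u1hat (within2 c) y / (1 - betaHat (within2 c) y y')
    - u1hat (between c) y / (1 - betaHat (between c) y y'))


/-! ### Finite product second moment -/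

lemma sum_pi_prod {E X : Type*} [Fintype E] [DecidableEq E] [Fintype X]
    (w : E → X → ℝ) : ∑ z : E → X, ∏ e, w e (z e) = ∏ e, ∑ x, w e x := by
  rw [Finset.prod_univ_sum]
  simp [Fintype.piFinset_univ]

lemma second_moment {E X : Type*} [Fintype E] [DecidableEq E] [Fintype X]
    (w g : E → X → ℝ) (hw : ∀ e, ∑ x, w e x = 1) (hg : ∀ e, ∑ x, w e x * g e x = 0) :
    ∑ z : E → X, (∏ e, w e (z e)) * (∑ e, g e (z e)) ^ 2
      = ∑ e, ∑ x, w e x * g e x ^ 2 := by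
  have key : ∀ e e' : E, ∑ z : E → X, (∏ k, w k (z k)) * (g e (z e) * g e' (z e'))
      = if e = e' then ∑ x, w e x * g e x ^ 2 else 0 := by
    intro e e'
    have h1 : ∀ z : E → X, (∏ k, w k (z k)) * (g e (z e) * g e' (z e'))
        = ∏ k, (w k (z k) * ((if k = e then g e (z k) else 1) *
            (if k = e' then g e' (z k) else 1))) := by
      intro z
      rw [Finset.prod_mul_distrib, Finset.prod_mul_distrib]
      simp
    simp_rw [h1]
    rw [sum_pi_prod (fun k x => w k x * ((if k = e then g e x else 1) *
            (if k = e' then g e' x else 1)))]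
    split_ifs with h
    · subst h
      rw [Finset.prod_eq_single e]
      · simp [pow_two]
      · intro b _ hb
        simp [hb, hw]
      · simp
    · apply Finset.prod_eq_zero (Finset.mem_univ e)
      simp [h, hg]
  have h2 : ∀ z : E → X, (∏ e, w e (z e)) * (∑ e, g e (z e)) ^ 2
      = ∑ e, ∑ e', (∏ k, w k (z k)) * (g e (z e) * g e' (z e')) := by
    intro z
    rw [pow_two, Finset.sum_mul_sum, Finset.mul_sum]
    simp_rw [Finset.mul_sum]
  simp_rw [h2]
  rw [Finset.sum_comm]
  refine Finset.sum_congr rfl fun e _ => ?_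
  rw [Finset.sum_comm]
  simp_rw [key]
  simp

lemma second_moment_le {E X : Type*} [Fintype E] [DecidableEq E] [Fintype X]
    (w g : E → X → ℝ) (hw0 : ∀ e x, 0 ≤ w e x)
    (hw : ∀ e, ∑ x, w e x = 1) (hg : ∀ e, ∑ x, w e x * g e x = 0)
    (hb : ∀ e x, |g e x| ≤ 1) :
    ∑ z : E → X, (∏ e, w e (z e)) * (∑ e, g e (z e)) ^ 2 ≤ Fintype.card E := by
  rw [second_moment w g hw hg]
  calc ∑ e, ∑ x, w e x * g e x ^ 2 ≤ ∑ e : E, ∑ x, w e x := by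
        refine Finset.sum_le_sum fun e _ => Finset.sum_le_sum fun x _ => ?_
        have : g e x ^ 2 ≤ 1 := (sq_le_one_iff_abs_le_one _).2 (hb e x)
        nlinarith [hw0 e x]
    _ = Fintype.card E := by simp [hw]

/-! ### Configurations -/

/-- Unordered pairs. -/
abbrev EP (n : ℕ) := {p : Fin n × Fin n // p.1 < p.2}

/-- Joint mass of one pair. -/
def pw (B b : ℝ) (x : Bool × Bool × Bool) : ℝ :=
  (if x.1 then B else 1 - B) *
    (if x.1 then (if x.2.1 then 1 - b else b) else (if x.2.1 then 0 else 1)) *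
    (if x.1 then (if x.2.2 then 1 - b else b) else (if x.2.2 then 0 else 1))

lemma pw_nonneg {B b : ℝ} (hB0 : 0 ≤ B) (hB1 : B ≤ 1) (hb0 : 0 ≤ b) (hb1 : b ≤ 1)
    (x : Bool × Bool × Bool) : 0 ≤ pw B b x := by
  unfold pw
  have h1 : 0 ≤ 1 - B := by linarith
  have h2 : 0 ≤ 1 - b := by linarith
  split_ifs <;> positivity

lemma pw_sum (B b : ℝ) : ∑ x, pw B b x = 1 := by
  simp [pw, Fintype.sum_prod_type]
  ring

lemma pw_sum_y (B b : ℝ) :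
    ∑ x, pw B b x * ((if x.2.1 then 1 else 0) - B * (1 - b)) = 0 := by
  simp [pw, Fintype.sum_prod_type]
  ring

lemma pw_sum_d (B b : ℝ) :
    ∑ x, pw B b x * ((if x.2.1 != x.2.2 then 1 else 0) - 2 * (B * b * (1 - b))) = 0 := by
  simp [pw, Fintype.sum_prod_type]
  ring

/-- Mass of a full configuration. -/
def cmass {n : ℕ} (B βm : Bool → Bool → ℝ) (κ : ℝ) (l : Fin n → Bool)
    (z : EP n → Bool × Bool × Bool) : ℝ :=
  labelMass κ l * ∏ e : EP n, pw (B (l e.1.1) (l e.1.2)) (βm (l e.1.1) (l e.1.2)) (z e)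

/-- Symmetric matrix from its upper triangle. -/
def symMat {n : ℕ} (f : EP n → Bool) : Fin n → Fin n → Bool := fun i j =>
  if h : i < j then f ⟨(i, j), h⟩ else if h : j < i then f ⟨(j, i), h⟩ else false

lemma symMat_symm {n : ℕ} (f : EP n → Bool) (i j : Fin n) : symMat f i j = symMat f j i := by
  unfold symMat
  rcases lt_trichotomy i j with h | h | h
  · simp [h, h.not_gt]
  · simp [h]
  · simp [h, h.not_gt]

lemma symMat_loop {n : ℕ} (f : EP n → Bool) (i : Fin n) : symMat f i i = false := by
  simp [symMat]

lemma symMat_apply {n : ℕ} (f : EP n → Bool) (e : EP n) : symMat f e.1.1 e.1.2 = f e := by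
  simp [symMat, e.2]

lemma eq_symMat {n : ℕ} (a : Fin n → Fin n → Bool) (hs : ∀ i j, a i j = a j i)
    (hl : ∀ i, a i i = false) (f : EP n → Bool) (hf : ∀ e : EP n, a e.1.1 e.1.2 = f e) :
    a = symMat f := by
  funext i j
  unfold symMat
  rcases lt_trichotomy i j with h | h | h
  · simp [h, ← hf]
  · simp [h, hl]
  · simp [h, h.not_gt, ← hf, hs i j]

lemma prod_EP {n : ℕ} (f : Fin n × Fin n → ℝ) :
    ∏ p ∈ Finset.univ.filter (fun p : Fin n × Fin n => p.1 < p.2), f p = ∏ e : EP n, f e.1 := by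
  apply Finset.prod_subtype
  simp

/-- The upper triangle data at a sample point. -/
def zOf {n : ℕ} (a y y' : Fin n → Fin n → Bool) : EP n → Bool × Bool × Bool :=
  fun e => (a e.1.1 e.1.2, y e.1.1 e.1.2, y' e.1.1 e.1.2)

lemma atom_le {Ω : Type*} [MeasurableSpace Ω] {P : Measure Ω} {n : ℕ}
    {B βm : Bool → Bool → ℝ} {κ : ℝ}
    {c : Ω → Fin n → Bool} {A Y Y' : Ω → Fin n → Fin n → Bool}
    (h : IsObsSBM P n B βm κ c A Y Y') (l : Fin n → Bool) (z : EP n → Bool × Bool × Bool) :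
    P {ω | c ω = l ∧ zOf (A ω) (Y ω) (Y' ω) = z} ≤ ENNReal.ofReal (cmass B βm κ l z) := by
  have := h.law l (symMat fun e => (z e).1) (symMat fun e => (z e).2.1)
    (symMat fun e => (z e).2.2) (symMat_symm _) (symMat_loop _) (symMat_symm _) (symMat_loop _)
    (symMat_symm _) (symMat_loop _)
  have h2 : cmass B βm κ l z = labelMass κ l * edgeMass B l (symMat fun e => (z e).1) *
      obsMass βm l (symMat fun e => (z e).1) (symMat fun e => (z e).2.1) *
      obsMass βm l (symMat fun e => (z e).1) (symMat fun e => (z e).2.2) := by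
    unfold cmass edgeMass obsMass pw
    rw [prod_EP, prod_EP, prod_EP]
    simp_rw [symMat_apply]
    rw [Finset.prod_mul_distrib, Finset.prod_mul_distrib]
    ring
  rw [h2, ← this]
  apply measure_mono
  rintro ω ⟨h1, h2⟩
  refine ⟨h1, ?_, ?_, ?_⟩
  · exact eq_symMat _ (h.symmA ω) (h.looplessA ω) _ fun e => by rw [← h2]; rfl
  · exact eq_symMat _ (h.symmY ω) (h.looplessY ω) _ fun e => by rw [← h2]; rfl
  · exact eq_symMat _ (h.symmY' ω) (h.looplessY' ω) _ fun e => by rw [← h2]; rfl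

lemma labelMass_nonneg {κ : ℝ} (h0 : 0 < κ) (h1 : κ < 1) {n : ℕ} (l : Fin n → Bool) :
    0 ≤ labelMass κ l := by
  apply Finset.prod_nonneg
  intro i _
  split_ifs <;> linarith

/-- All entries lie in the unit interval. -/
def Unit01 (B : Bool → Bool → ℝ) : Prop := ∀ x y, 0 ≤ B x y ∧ B x y ≤ 1

lemma cmass_nonneg {κ : ℝ} (h0 : 0 < κ) (h1 : κ < 1) {n : ℕ} {B βm : Bool → Bool → ℝ}
    (hB : Unit01 B) (hb : Unit01 βm) (l : Fin n → Bool) (z : EP n → Bool × Bool × Bool) :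
    0 ≤ cmass B βm κ l z :=
  mul_nonneg (labelMass_nonneg h0 h1 l) (Finset.prod_nonneg fun _ _ =>
    pw_nonneg (hB _ _).1 (hB _ _).2 (hb _ _).1 (hb _ _).2 _)

lemma markov_cfg {Ω : Type*} [MeasurableSpace Ω] {P : Measure Ω} {n : ℕ}
    {B βm : Bool → Bool → ℝ} {κ : ℝ}
    {c : Ω → Fin n → Bool} {A Y Y' : Ω → Fin n → Fin n → Bool}
    (h0 : 0 < κ) (h1 : κ < 1) (hB : Unit01 B) (hb : Unit01 βm)
    (h : IsObsSBM P n B βm κ c A Y Y')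
    (f : (Fin n → Bool) → (EP n → Bool × Bool × Bool) → ℝ) (t : ℝ) (ht : 0 < t) :
    P {ω | t < |f (c ω) (zOf (A ω) (Y ω) (Y' ω))|}
      ≤ ENNReal.ofReal ((∑ l, ∑ z, cmass B βm κ l z * f l z ^ 2) / t ^ 2) := by
  classical
  have hsub : {ω | t < |f (c ω) (zOf (A ω) (Y ω) (Y' ω))|} ⊆
      ⋃ lz ∈ (Finset.univ.filter fun lz : (Fin n → Bool) × (EP n → Bool × Bool × Bool) =>
        t < |f lz.1 lz.2|), {ω | c ω = lz.1 ∧ zOf (A ω) (Y ω) (Y' ω) = lz.2} := by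
    intro ω hω
    simp only [Set.mem_iUnion]
    exact ⟨(c ω, zOf (A ω) (Y ω) (Y' ω)), by simpa using hω, rfl, rfl⟩
  refine (measure_mono hsub).trans ((measure_biUnion_finset_le _ _).trans ?_)
  refine (Finset.sum_le_sum fun lz _ => atom_le h lz.1 lz.2).trans ?_
  rw [← ENNReal.ofReal_sum_of_nonneg fun lz _ => cmass_nonneg h0 h1 hB hb _ _]
  apply ENNReal.ofReal_le_ofReal
  rw [← Fintype.sum_prod_type' (fun l z => cmass B βm κ l z * f l z ^ 2), Finset.sum_div]
  calc _ ≤ ∑ lz ∈ (Finset.univ.filter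
            fun lz : (Fin n → Bool) × (EP n → Bool × Bool × Bool) => t < |f lz.1 lz.2|),
            cmass B βm κ lz.1 lz.2 * f lz.1 lz.2 ^ 2 / t ^ 2 := by
        refine Finset.sum_le_sum fun lz hlz => ?_
        rw [Finset.mem_filter] at hlz
        have h3 : t ^ 2 ≤ f lz.1 lz.2 ^ 2 := by
          rw [← sq_abs (f lz.1 lz.2)]
          exact pow_le_pow_left₀ ht.le hlz.2.le 2
        rw [le_div_iff₀ (by positivity)]
        exact mul_le_mul_of_nonneg_left h3 (cmass_nonneg h0 h1 hB hb _ _)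
    _ ≤ _ := by
        refine Finset.sum_le_sum_of_subset_of_nonneg (Finset.filter_subset _ _) fun lz _ _ => ?_
        exact div_nonneg (mul_nonneg (cmass_nonneg h0 h1 hB hb _ _) (sq_nonneg _)) (sq_nonneg _)

lemma label_sum (κ : ℝ) (n : ℕ) : ∑ l : Fin n → Bool, labelMass κ l = 1 := by
  unfold labelMass
  rw [sum_pi_prod (fun (_ : Fin n) (x : Bool) => if x then κ else 1 - κ)]
  simp

lemma card_EP_le (n : ℕ) : (Fintype.card (EP n) : ℝ) ≤ (n : ℝ) ^ 2 := by
  have : Fintype.card (EP n) ≤ Fintype.card (Fin n × Fin n) := Fintype.card_subtype_le _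
  simp only [Fintype.card_prod, Fintype.card_fin] at this
  rw [pow_two]
  exact_mod_cast this

lemma label_moment {κ : ℝ} (h0 : 0 < κ) (h1 : κ < 1) {n : ℕ} (B βm : Bool → Bool → ℝ) :
    ∑ l : Fin n → Bool, ∑ z, cmass B βm κ l z * (∑ i, ((if l i then 1 else 0) - κ)) ^ 2 ≤ n := by
  have : ∀ l : Fin n → Bool, ∑ z, cmass B βm κ l z * (∑ i, ((if l i then 1 else 0) - κ)) ^ 2
      = labelMass κ l * (∑ i, ((if l i then 1 else 0) - κ)) ^ 2 := by
    intro l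
    rw [← Finset.sum_mul]
    unfold cmass
    rw [← Finset.mul_sum, sum_pi_prod (fun (e : EP n) x =>
      pw (B (l e.1.1) (l e.1.2)) (βm (l e.1.1) (l e.1.2)) x)]
    simp [pw_sum]
  simp_rw [this]
  have := second_moment_le (E := Fin n) (X := Bool) (fun _ x => if x then κ else 1 - κ)
    (fun _ x => (if x then 1 else 0) - κ) (by intro _ x; split_ifs <;> linarith) (by simp)
    (by intro; simp; ring) (by intro _ x; rw [abs_le]; constructor <;> split_ifs <;> linarith)
  simpa [labelMass] using this

lemma edge_moment {κ : ℝ} (h0 : 0 < κ) (h1 : κ < 1) {n : ℕ} {B βm : Bool → Bool → ℝ}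
    (hB : Unit01 B) (hb : Unit01 βm)
    (g : (Fin n → Bool) → EP n → Bool × Bool × Bool → ℝ)
    (hg : ∀ l e, ∑ x, pw (B (l e.1.1) (l e.1.2)) (βm (l e.1.1) (l e.1.2)) x * g l e x = 0)
    (hg1 : ∀ l e x, |g l e x| ≤ 1) :
    ∑ l : Fin n → Bool, ∑ z, cmass B βm κ l z * (∑ e, g l e (z e)) ^ 2 ≤ (n : ℝ) ^ 2 := by
  have : ∀ l : Fin n → Bool, ∑ z, cmass B βm κ l z * (∑ e, g l e (z e)) ^ 2
      ≤ labelMass κ l * (n : ℝ) ^ 2 := by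
    intro l
    unfold cmass
    simp_rw [mul_assoc]
    rw [← Finset.mul_sum]
    refine mul_le_mul_of_nonneg_left ?_ (labelMass_nonneg h0 h1 l)
    refine (second_moment_le (fun (e : EP n) x =>
      pw (B (l e.1.1) (l e.1.2)) (βm (l e.1.1) (l e.1.2)) x) (g l) ?_ ?_ (hg l)
      (hg1 l)).trans (card_EP_le n)
    · intro e x; exact pw_nonneg (hB _ _).1 (hB _ _).2 (hb _ _).1 (hb _ _).2 _
    · intro e; exact pw_sum _ _
  refine (Finset.sum_le_sum fun l _ => this l).trans ?_
  rw [← Finset.sum_mul, label_sum, one_mul]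

/-! ### Counting -/

lemma pairCard_eq {n : ℕ} (sel : Fin n → Fin n → Bool) :
    pairCard sel = ∑ e : EP n, if sel e.1.1 e.1.2 then (1 : ℝ) else 0 := by
  have h : ∑ e : EP n, (if sel e.1.1 e.1.2 then (1 : ℝ) else 0) =
      ∑ p ∈ Finset.univ.filter (fun p : Fin n × Fin n => p.1 < p.2),
        if sel p.1 p.2 then (1 : ℝ) else 0 := by
    symm
    apply Finset.sum_subtype (f := fun p : Fin n × Fin n => if sel p.1 p.2 then (1 : ℝ) else 0)
    simp
  rw [h, pairCard, Finset.card_filter, Finset.sum_filter]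
  push_cast
  refine Finset.sum_congr rfl fun p _ => ?_
  by_cases h1 : p.1 < p.2 <;> simp [h1]

lemma full_count_le {n : ℕ} (sel : Fin n → Fin n → Bool) (hs : ∀ i j, sel i j = sel j i) :
    ∑ i, ∑ j, (if sel i j then (1 : ℝ) else 0) ≤ 2 * pairCard sel + n := by
  have e1 : pairCard sel = ∑ i, ∑ j, if i < j then (if sel i j then (1 : ℝ) else 0) else 0 := by
    rw [pairCard, Finset.card_filter, Fintype.sum_prod_type]
    push_cast
    refine Finset.sum_congr rfl fun i _ => Finset.sum_congr rfl fun j _ => ?_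
    by_cases h1 : i < j <;> simp [h1]
  have e2 : pairCard sel = ∑ i, ∑ j, if j < i then (if sel i j then (1 : ℝ) else 0) else 0 := by
    rw [e1, Finset.sum_comm]
    simp_rw [hs]
  have e3 : (n : ℝ) = ∑ i : Fin n, ∑ j : Fin n, if i = j then (1 : ℝ) else 0 := by simp
  have : 2 * pairCard sel + n = ∑ i, ∑ j, ((if i < j then (if sel i j then (1 : ℝ) else 0) else 0)
      + (if j < i then (if sel i j then (1 : ℝ) else 0) else 0) + if i = j then (1 : ℝ) else 0) := by
    simp_rw [Finset.sum_add_distrib]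
    rw [← e1, ← e2, ← e3]
    ring
  rw [this]
  refine Finset.sum_le_sum fun i _ => Finset.sum_le_sum fun j _ => ?_
  rcases lt_trichotomy i j with h | h | h
  · simp [h, h.not_gt, h.ne]
  · simp [h]; split_ifs <;> norm_num
  · simp [h, h.not_gt, h.ne']

/-- A class of pairs on which the parameters are constant. -/
structure GoodCls {n : ℕ} (B βm : Bool → Bool → ℝ) (κ η : ℝ)
    (cls : (Fin n → Bool) → Fin n → Fin n → Bool) (B0 b0 : ℝ) : Prop where
  symm : ∀ l i j, cls l i j = cls l j i
  hB : ∀ l i j, cls l i j = true → B (l i) (l j) = B0 ∧ βm (l i) (l j) = b0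
  cnt : ∀ l : Fin n → Bool, |∑ i, ((if l i then (1 : ℝ) else 0) - κ)| ≤ η * n →
    η ^ 2 * (n : ℝ) ^ 2 ≤ ∑ i, ∑ j, if cls l i j then (1 : ℝ) else 0

lemma label_counts {n : ℕ} {κ η : ℝ} (hη : 2 * η ≤ κ) (hη' : 2 * η ≤ 1 - κ) (l : Fin n → Bool)
    (h : |∑ i, ((if l i then (1 : ℝ) else 0) - κ)| ≤ η * n) :
    η * n ≤ ∑ i, (if l i then (1 : ℝ) else 0) ∧ η * n ≤ ∑ i, (if l i then (0 : ℝ) else 1) := by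
  have h2 : ∑ i, (if l i then (0 : ℝ) else 1) = n - ∑ i, (if l i then (1 : ℝ) else 0) := by
    have : ∀ i, (if l i then (0 : ℝ) else 1) = 1 - (if l i then (1 : ℝ) else 0) := by
      intro i; split_ifs <;> norm_num
    simp_rw [this, Finset.sum_sub_distrib]
    simp
  rw [h2]
  rw [Finset.sum_sub_distrib, abs_le] at h
  simp only [Finset.sum_const, Finset.card_univ, Fintype.card_fin, nsmul_eq_mul] at h
  have hn : (0 : ℝ) ≤ n := Nat.cast_nonneg n
  constructor <;> nlinarith

lemma good_within1 {n : ℕ} {κ η x₁ x₂ xb y₁ y₂ yb : ℝ} (hη0 : 0 < η) (hη : 2 * η ≤ κ)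
    (hη' : 2 * η ≤ 1 - κ) :
    GoodCls (n := n) (sbmB x₁ x₂ xb) (sbmB y₁ y₂ yb) κ η within1 x₁ y₁ where
  symm l i j := by simp [within1, Bool.and_comm]
  hB l i j h := by
    simp [within1] at h
    simp [sbmB, h]
  cnt l h := by
    obtain ⟨h1, h2⟩ := label_counts hη hη' l h
    have : ∀ i j, (if within1 l i j then (1 : ℝ) else 0) =
        (if l i then (1 : ℝ) else 0) * (if l j then (1 : ℝ) else 0) := by
      intro i j
      unfold within1
      cases l i <;> cases l j <;> simp
    simp_rw [this]
    rw [← Finset.sum_mul_sum]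
    have : 0 ≤ η * n := by positivity
    nlinarith

lemma good_within2 {n : ℕ} {κ η x₁ x₂ xb y₁ y₂ yb : ℝ} (hη0 : 0 < η) (hη : 2 * η ≤ κ)
    (hη' : 2 * η ≤ 1 - κ) :
    GoodCls (n := n) (sbmB x₁ x₂ xb) (sbmB y₁ y₂ yb) κ η within2 x₂ y₂ where
  symm l i j := by simp [within2, Bool.and_comm]
  hB l i j h := by
    simp [within2] at h
    simp [sbmB, h]
  cnt l h := by
    obtain ⟨h1, h2⟩ := label_counts hη hη' l h
    have : ∀ i j, (if within2 l i j then (1 : ℝ) else 0) =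
        (if l i then (0 : ℝ) else 1) * (if l j then (0 : ℝ) else 1) := by
      intro i j
      unfold within2
      cases l i <;> cases l j <;> simp
    simp_rw [this]
    rw [← Finset.sum_mul_sum]
    have : 0 ≤ η * n := by positivity
    nlinarith

lemma good_between {n : ℕ} {κ η x₁ x₂ xb y₁ y₂ yb : ℝ} (hη0 : 0 < η) (hη : 2 * η ≤ κ)
    (hη' : 2 * η ≤ 1 - κ) :
    GoodCls (n := n) (sbmB x₁ x₂ xb) (sbmB y₁ y₂ yb) κ η between xb yb where
  symm l i j := by unfold between; cases l i <;> cases l j <;> rfl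
  hB l i j h := by
    unfold between at h
    unfold sbmB
    cases hi : l i <;> cases hj : l j <;> simp_all
  cnt l h := by
    obtain ⟨h1, h2⟩ := label_counts hη hη' l h
    have : ∀ i j, (if between l i j then (1 : ℝ) else 0) =
        (if l i then (0 : ℝ) else 1) * (if l j then (1 : ℝ) else 0) +
        (if l i then (1 : ℝ) else 0) * (if l j then (0 : ℝ) else 1) := by
      intro i j
      unfold between
      cases l i <;> cases l j <;> simp
    simp_rw [this, Finset.sum_add_distrib]
    rw [← Finset.sum_mul_sum, ← Finset.sum_mul_sum]
    have : 0 ≤ η * n := by positivity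
    nlinarith

/-! ### The probabilistic bound for one class -/

lemma class_bound {Ω : Type*} [MeasurableSpace Ω] {P : Measure Ω} {n : ℕ}
    {B βm : Bool → Bool → ℝ} {κ η : ℝ}
    {c : Ω → Fin n → Bool} {A Y Y' : Ω → Fin n → Fin n → Bool}
    (h0 : 0 < κ) (h1 : κ < 1) (hB : Unit01 B) (hb : Unit01 βm)
    (h : IsObsSBM P n B βm κ c A Y Y')
    {cls : (Fin n → Bool) → Fin n → Fin n → Bool} {B0 b0 : ℝ}
    (hc : GoodCls B βm κ η cls B0 b0) (hη : 0 < η) (K : ℝ) (hK : 0 < K)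
    (hn : 2 ≤ η ^ 2 * n) :
    P {ω | ¬ ((n : ℝ) * |u1hat (cls (c ω)) (Y ω) - B0 * (1 - b0)| ≤ 4 * K / η ^ 2 ∧
        (n : ℝ) * |u2hat (cls (c ω)) (Y ω) (Y' ω) - B0 * b0 * (1 - b0)| ≤ 4 * K / η ^ 2)}
      ≤ ENNReal.ofReal (1 / (η ^ 2 * n) + 2 / K ^ 2) := by
  have hn0 : (0 : ℝ) < n := by
    by_contra hcon
    have : 0 < η ^ 2 := by positivity
    nlinarith
  -- the three deviations
  let f0 : (Fin n → Bool) → (EP n → Bool × Bool × Bool) → ℝ :=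
    fun l _ => ∑ i, ((if l i then 1 else 0) - κ)
  let g1 : (Fin n → Bool) → EP n → Bool × Bool × Bool → ℝ := fun l e x =>
    if cls l e.1.1 e.1.2 then (if x.2.1 then 1 else 0) - B0 * (1 - b0) else 0
  let g2 : (Fin n → Bool) → EP n → Bool × Bool × Bool → ℝ := fun l e x =>
    if cls l e.1.1 e.1.2 then (if x.2.1 != x.2.2 then 1 else 0) - 2 * (B0 * b0 * (1 - b0)) else 0
  have hpar : ∀ l i j, cls l i j = true → (0 ≤ B0 ∧ B0 ≤ 1) ∧ (0 ≤ b0 ∧ b0 ≤ 1) := by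
    intro l i j hl
    obtain ⟨e1, e2⟩ := hc.hB l i j hl
    rw [← e1, ← e2]
    exact ⟨hB _ _, hb _ _⟩
  have E0 := markov_cfg h0 h1 hB hb h f0 (η * n) (by positivity)
  have E1 := markov_cfg h0 h1 hB hb h (fun l z => ∑ e, g1 l e (z e)) (K * n) (by positivity)
  have E2 := markov_cfg h0 h1 hB hb h (fun l z => ∑ e, g2 l e (z e)) (K * n) (by positivity)
  have M0 : (∑ l, ∑ z, cmass B βm κ l z * f0 l z ^ 2) / (η * n) ^ 2 ≤ 1 / (η ^ 2 * n) := by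
    have := label_moment (n := n) h0 h1 B βm
    rw [div_le_div_iff₀ (by positivity) (by positivity)]
    have h5 : 0 < η ^ 2 * n := by positivity
    calc _ ≤ (n : ℝ) * (η ^ 2 * n) := mul_le_mul_of_nonneg_right this h5.le
      _ = _ := by ring
  have M1 : (∑ l, ∑ z, cmass B βm κ l z * (∑ e, g1 l e (z e)) ^ 2) / (K * n) ^ 2 ≤ 1 / K ^ 2 := by
    have := edge_moment (n := n) h0 h1 hB hb g1 ?_ ?_
    · rw [div_le_div_iff₀ (by positivity) (by positivity)]
      have h5 : 0 < K ^ 2 := by positivity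
      calc _ ≤ (n : ℝ) ^ 2 * K ^ 2 := mul_le_mul_of_nonneg_right this h5.le
        _ = _ := by ring
    · intro l e
      by_cases hl : cls l e.1.1 e.1.2 = true
      · obtain ⟨e1, e2⟩ := hc.hB l _ _ hl
        simp only [g1, hl, if_true, e1, e2]
        exact pw_sum_y _ _
      · simp [g1, hl]
    · intro l e x
      by_cases hl : cls l e.1.1 e.1.2 = true
      · obtain ⟨⟨p1, p2⟩, p3, p4⟩ := hpar l _ _ hl
        have q1 : 0 ≤ B0 * (1 - b0) := mul_nonneg p1 (by linarith)
        have q2 : B0 * (1 - b0) ≤ 1 := by nlinarith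
        simp only [g1, hl, if_true]
        rw [abs_le]; constructor <;> split_ifs <;> linarith
      · simp [g1, hl]
  have M2 : (∑ l, ∑ z, cmass B βm κ l z * (∑ e, g2 l e (z e)) ^ 2) / (K * n) ^ 2 ≤ 1 / K ^ 2 := by
    have := edge_moment (n := n) h0 h1 hB hb g2 ?_ ?_
    · rw [div_le_div_iff₀ (by positivity) (by positivity)]
      have h5 : 0 < K ^ 2 := by positivity
      calc _ ≤ (n : ℝ) ^ 2 * K ^ 2 := mul_le_mul_of_nonneg_right this h5.le
        _ = _ := by ring
    · intro l e
      by_cases hl : cls l e.1.1 e.1.2 = true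
      · obtain ⟨e1, e2⟩ := hc.hB l _ _ hl
        simp only [g2, hl, if_true, e1, e2]
        exact pw_sum_d _ _
      · simp [g2, hl]
    · intro l e x
      by_cases hl : cls l e.1.1 e.1.2 = true
      · obtain ⟨⟨p1, p2⟩, p3, p4⟩ := hpar l _ _ hl
        have q0 : 0 ≤ b0 * (1 - b0) := mul_nonneg p3 (by linarith)
        have q1 : 0 ≤ B0 * b0 * (1 - b0) := mul_nonneg (mul_nonneg p1 p3) (by linarith)
        have q3 : 4 * (b0 * (1 - b0)) ≤ 1 := by nlinarith [sq_nonneg (2 * b0 - 1)]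
        have q2 : 4 * (B0 * b0 * (1 - b0)) ≤ 1 := by nlinarith
        simp only [g2, hl, if_true]
        rw [abs_le]; constructor <;> split_ifs <;> linarith
      · simp [g2, hl]
  have hsub : {ω | ¬ ((n : ℝ) * |u1hat (cls (c ω)) (Y ω) - B0 * (1 - b0)| ≤ 4 * K / η ^ 2 ∧
        (n : ℝ) * |u2hat (cls (c ω)) (Y ω) (Y' ω) - B0 * b0 * (1 - b0)| ≤ 4 * K / η ^ 2)} ⊆
      {ω | η * n < |f0 (c ω) (zOf (A ω) (Y ω) (Y' ω))|} ∪
      ({ω | K * n < |∑ e, g1 (c ω) e (zOf (A ω) (Y ω) (Y' ω) e)|} ∪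
      {ω | K * n < |∑ e, g2 (c ω) e (zOf (A ω) (Y ω) (Y' ω) e)|}) := by
    intro ω hω
    by_contra hcon
    simp only [Set.mem_union, Set.mem_ofPred_eq, not_or, not_lt] at hcon
    obtain ⟨k0, k1, k2⟩ := hcon
    apply hω
    have cnt := (hc.cnt (c ω) k0).trans (full_count_le _ (hc.symm (c ω)))
    set N := pairCard (cls (c ω)) with hN
    have hNlow : η ^ 2 * (n : ℝ) ^ 2 / 4 ≤ N := by nlinarith
    have hNpos : 0 < N := lt_of_lt_of_le (by positivity) hNlow
    have s1 : ∑ e, g1 (c ω) e (zOf (A ω) (Y ω) (Y' ω) e)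
        = N * (u1hat (cls (c ω)) (Y ω) - B0 * (1 - b0)) := by
      unfold u1hat
      rw [← hN, mul_sub, mul_div_cancel₀ _ hNpos.ne', hN, pairCard_eq, pairCard_eq, Finset.sum_mul,
        ← Finset.sum_sub_distrib]
      refine Finset.sum_congr rfl fun e _ => ?_
      by_cases hl : cls (c ω) e.1.1 e.1.2 = true <;> simp [g1, hl, zOf]
    have s2 : ∑ e, g2 (c ω) e (zOf (A ω) (Y ω) (Y' ω) e)
        = 2 * N * (u2hat (cls (c ω)) (Y ω) (Y' ω) - B0 * b0 * (1 - b0)) := by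
      unfold u2hat
      rw [← hN, mul_sub, mul_div_cancel₀ _ (by positivity), mul_comm 2 N, mul_assoc, hN,
        pairCard_eq, pairCard_eq, Finset.sum_mul, ← Finset.sum_sub_distrib]
      refine Finset.sum_congr rfl fun e _ => ?_
      by_cases hl : cls (c ω) e.1.1 e.1.2 = true <;> simp [g2, hl, zOf]
    rw [s1, abs_mul, abs_of_pos hNpos] at k1
    rw [s2, abs_mul, abs_of_pos (by positivity)] at k2
    have fin : ∀ x : ℝ, 0 ≤ x → N * x ≤ K * n → n * x ≤ 4 * K / η ^ 2 := by
      intro x hx hxN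
      rw [le_div_iff₀ (by positivity)]
      have : η ^ 2 * (n : ℝ) ^ 2 / 4 * x ≤ K * n := (mul_le_mul_of_nonneg_right hNlow hx).trans hxN
      have : n * (n * x * η ^ 2) ≤ n * (4 * K) := by nlinarith
      exact le_of_mul_le_mul_left this hn0
    refine ⟨fin _ (abs_nonneg _) k1, fin _ (abs_nonneg _) ?_⟩
    have := mul_nonneg hNpos.le (abs_nonneg
      (u2hat (cls (c ω)) (Y ω) (Y' ω) - B0 * b0 * (1 - b0)))
    nlinarith
  refine (measure_mono hsub).trans ((measure_union_le _ _).trans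
    ((add_le_add le_rfl (measure_union_le _ _)).trans ?_))
  refine (add_le_add E0 (add_le_add E1 E2)).trans ?_
  have p0 : 0 ≤ 1 / (η ^ 2 * n) := by positivity
  have p1 : 0 ≤ 1 / K ^ 2 := by positivity
  calc _ ≤ ENNReal.ofReal (1 / (η ^ 2 * n)) + (ENNReal.ofReal (1 / K ^ 2) +
        ENNReal.ofReal (1 / K ^ 2)) :=
        add_le_add (ENNReal.ofReal_le_ofReal M0)
          (add_le_add (ENNReal.ofReal_le_ofReal M1) (ENNReal.ofReal_le_ofReal M2))
    _ = _ := by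
        rw [← ENNReal.ofReal_add p1 p1, ← ENNReal.ofReal_add p0 (by positivity)]
        congr 1
        ring

/-! ### Deterministic consequences -/

lemma det_bound {q β C : ℝ} (hq0 : 0 < q) (hq1 : q < 1) (hβ0 : 0 < β) (hβ1 : β < 1)
    (hC : 0 < C) {Bn bn : ℕ → ℝ} (hB : Tendsto Bn atTop (nhds q))
    (hb : Tendsto bn atTop (nhds β)) :
    ∃ C' > (0 : ℝ), ∀ᶠ n : ℕ in atTop, ∀ u1 u2 : ℝ,
      (n : ℝ) * |u1 - Bn n * (1 - bn n)| ≤ C →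
      (n : ℝ) * |u2 - Bn n * bn n * (1 - bn n)| ≤ C →
      (n : ℝ) * |u2 / u1 - bn n| ≤ C' ∧ (n : ℝ) * |u1 / (1 - u2 / u1) - Bn n| ≤ C' := by
  set m := q * (1 - β) with hm
  have h1β : 0 < 1 - β := by linarith
  have hm0 : 0 < m := mul_pos hq0 h1β
  set D := 4 * C / m with hD
  have hD0 : 0 < D := by positivity
  refine ⟨max D ((C + D) * (4 / (1 - β))), lt_max_of_lt_left hD0, ?_⟩
  have e1 : ∀ᶠ n : ℕ in atTop, 3 * m / 4 < Bn n * (1 - bn n) :=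
    (hB.mul (tendsto_const_nhds.sub hb)).eventually_const_lt (by linarith)
  have e2 : ∀ᶠ n : ℕ in atTop, 0 < bn n := hb.eventually_const_lt hβ0
  have e3 : ∀ᶠ n : ℕ in atTop, bn n < 1 - (1 - β) / 2 := hb.eventually_lt_const (by linarith)
  have e4 : ∀ᶠ n : ℕ in atTop, 0 < Bn n := hB.eventually_const_lt hq0
  have e5 : ∀ᶠ n : ℕ in atTop, Bn n < 1 := hB.eventually_lt_const hq1
  have e6 : ∀ᶠ n : ℕ in atTop, 4 * C / m ≤ (n : ℝ) :=
    tendsto_natCast_atTop_atTop.eventually_ge_atTop _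
  have e7 : ∀ᶠ n : ℕ in atTop, 4 * D / (1 - β) ≤ (n : ℝ) :=
    tendsto_natCast_atTop_atTop.eventually_ge_atTop _
  filter_upwards [e1, e2, e3, e4, e5, e6, e7, eventually_gt_atTop 0]
    with n e1 e2 e3 e4 e5 e6 e7 hn u1 u2 k1 k2
  have hn0 : (0 : ℝ) < n := by exact_mod_cast hn
  set B := Bn n
  set b := bn n
  have hb1 : b < 1 := by linarith
  have a1 : |u1 - B * (1 - b)| ≤ C / n := by rw [le_div_iff₀ hn0]; linarith
  have a2 : C / n ≤ m / 4 := by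
    rw [div_le_iff₀ hm0] at e6
    rw [div_le_iff₀ hn0]; linarith
  have hu : m / 2 < u1 := by
    have := (abs_le.1 a1).1
    linarith
  have hu0 : 0 < u1 := by linarith
  have k3 : (n : ℝ) * |u2 - b * u1| ≤ 2 * C := by
    have t : |u2 - b * u1| ≤ |u2 - B * b * (1 - b)| + |u1 - B * (1 - b)| := by
      have : u2 - b * u1 = (u2 - B * b * (1 - b)) - b * (u1 - B * (1 - b)) := by ring
      rw [this]
      refine (abs_sub _ _).trans ?_
      rw [abs_mul, abs_of_pos e2]
      nlinarith [abs_nonneg (u1 - B * (1 - b))]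
    nlinarith
  have k4 : (n : ℝ) * |u2 / u1 - b| ≤ D := by
    have : u2 / u1 - b = (u2 - b * u1) / u1 := by field_simp
    rw [this, abs_div, abs_of_pos hu0, ← mul_div_assoc, div_le_iff₀ hu0]
    have : D * (m / 2) = 2 * C := by rw [hD]; field_simp; ring
    nlinarith
  refine ⟨k4.trans (le_max_left _ _), le_trans ?_ (le_max_right _ _)⟩
  set r := u2 / u1
  have a3 : |r - b| ≤ (1 - β) / 4 := by
    rw [div_le_iff₀ h1β] at e7
    have : (n : ℝ) * |r - b| ≤ n * ((1 - β) / 4) := by linarith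
    exact le_of_mul_le_mul_left this hn0
  have hr : (1 - β) / 4 ≤ 1 - r := by
    have := (abs_le.1 a3).2
    linarith
  have hr0 : 0 < 1 - r := by linarith
  have k5 : (n : ℝ) * |u1 - B * (1 - r)| ≤ C + D := by
    have t : |u1 - B * (1 - r)| ≤ |u1 - B * (1 - b)| + |r - b| := by
      have : u1 - B * (1 - r) = (u1 - B * (1 - b)) + B * (r - b) := by ring
      rw [this]
      refine (abs_add_le _ _).trans ?_
      rw [abs_mul, abs_of_pos e4]
      nlinarith [abs_nonneg (r - b)]
    nlinarith
  have : u1 / (1 - r) - B = (u1 - B * (1 - r)) / (1 - r) := by field_simp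
  rw [this, abs_div, abs_of_pos hr0, ← mul_div_assoc, div_le_iff₀ hr0]
  have t2 : (C + D) * (4 / (1 - β)) * ((1 - β) / 4) = C + D := by field_simp
  have t3 : 0 ≤ (C + D) * (4 / (1 - β)) := by positivity
  nlinarith

lemma tendsto_div_sqrt (x : ℝ) :
    Tendsto (fun n : ℕ => x / Real.sqrt n) atTop (nhds 0) :=
  tendsto_const_nhds.div_atTop (Real.tendsto_sqrt_atTop.comp tendsto_natCast_atTop_atTop)

lemma unit01_eventually {q μ₁ μ₂ : ℝ} (hq0 : 0 < q) (hq1 : q < 1) :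
    ∀ᶠ n : ℕ in atTop, Unit01 (sbmB (q + μ₁ / Real.sqrt n) (q + μ₂ / Real.sqrt n) q) := by
  have t1 : Tendsto (fun n : ℕ => q + μ₁ / Real.sqrt n) atTop (nhds q) := by
    simpa using (tendsto_const_nhds (x := q)).add (tendsto_div_sqrt μ₁)
  have t2 : Tendsto (fun n : ℕ => q + μ₂ / Real.sqrt n) atTop (nhds q) := by
    simpa using (tendsto_const_nhds (x := q)).add (tendsto_div_sqrt μ₂)
  filter_upwards [t1.eventually_const_lt hq0, t1.eventually_lt_const hq1,
    t2.eventually_const_lt hq0, t2.eventually_lt_const hq1] with n h1 h2 h3 h4 x y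
  unfold sbmB
  split_ifs <;> constructor <;> linarith

/-- The joint good event for one class. -/
def ClsOK {n : ℕ} (cls y y' : Fin n → Fin n → Bool) (B0 b0 C : ℝ) : Prop :=
  (n : ℝ) * |betaHat cls y y' - b0| ≤ C ∧
    (n : ℝ) * |u1hat cls y / (1 - betaHat cls y y') - B0| ≤ C

lemma class_main {κ q β μ₁ μ₂ γ₁ γ₂ : ℝ}
    (hκ0 : 0 < κ) (hκ1 : κ < 1) (hq0 : 0 < q) (hq1 : q < 1)
    (hβ0 : 0 < β) (hβ1 : β < 1)
    {Ω : ℕ → Type} [mΩ : ∀ n, MeasurableSpace (Ω n)] {P : ∀ n, Measure (Ω n)}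
    {c : ∀ n, Ω n → Fin n → Bool}
    {A Y Y' : ∀ n, Ω n → Fin n → Fin n → Bool}
    (hmodel : ∀ᶠ n : ℕ in atTop,
      IsObsSBM (P n) n
        (sbmB (q + μ₁ / Real.sqrt n) (q + μ₂ / Real.sqrt n) q)
        (sbmB (β - γ₁ / Real.sqrt n) (β - γ₂ / Real.sqrt n) β)
        κ (c n) (A n) (Y n) (Y' n))
    {cls : ∀ n, (Fin n → Bool) → Fin n → Fin n → Bool} {m g : ℝ}
    (hcls : ∀ n : ℕ, ∀ η : ℝ, 0 < η → 2 * η ≤ κ → 2 * η ≤ 1 - κ →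
      GoodCls (sbmB (q + μ₁ / Real.sqrt n) (q + μ₂ / Real.sqrt n) q)
        (sbmB (β - γ₁ / Real.sqrt n) (β - γ₂ / Real.sqrt n) β) κ η (cls n)
        (q + m / Real.sqrt n) (β - g / Real.sqrt n))
    (ε : ℝ) (hε : 0 < ε) :
    ∃ C > (0 : ℝ), ∀ᶠ n : ℕ in atTop,
      P n {ω | ¬ ClsOK (cls n (c n ω)) (Y n ω) (Y' n ω)
        (q + m / Real.sqrt n) (β - g / Real.sqrt n) C} ≤ ENNReal.ofReal ε := by
  set η := min κ (1 - κ) / 2 with hηd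
  have hη0 : 0 < η := by
    have : 0 < min κ (1 - κ) := lt_min hκ0 (by linarith)
    positivity
  have hη1 : 2 * η ≤ κ := by have := min_le_left κ (1 - κ); linarith
  have hη2 : 2 * η ≤ 1 - κ := by have := min_le_right κ (1 - κ); linarith
  set K := Real.sqrt (4 / ε) with hKd
  have hK0 : 0 < K := Real.sqrt_pos.2 (by positivity)
  have hK2 : K ^ 2 = 4 / ε := Real.sq_sqrt (by positivity)
  have t1 : Tendsto (fun n : ℕ => q + m / Real.sqrt n) atTop (nhds q) := by
    simpa using (tendsto_const_nhds (x := q)).add (tendsto_div_sqrt m)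
  have t2 : Tendsto (fun n : ℕ => β - g / Real.sqrt n) atTop (nhds β) := by
    simpa using (tendsto_const_nhds (x := β)).sub (tendsto_div_sqrt g)
  obtain ⟨C', hC', hdet⟩ := det_bound (C := 4 * K / η ^ 2) hq0 hq1 hβ0 hβ1 (by positivity) t1 t2
  refine ⟨C', hC', ?_⟩
  have u1 := unit01_eventually (μ₁ := μ₁) (μ₂ := μ₂) hq0 hq1
  have u2 : ∀ᶠ n : ℕ in atTop,
      Unit01 (sbmB (β - γ₁ / Real.sqrt n) (β - γ₂ / Real.sqrt n) β) := by
    have := unit01_eventually (μ₁ := -γ₁) (μ₂ := -γ₂) hβ0 hβ1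
    simpa only [neg_div, ← sub_eq_add_neg] using this
  have n1 : ∀ᶠ n : ℕ in atTop, 2 / η ^ 2 ≤ (n : ℝ) :=
    tendsto_natCast_atTop_atTop.eventually_ge_atTop _
  have n2 : ∀ᶠ n : ℕ in atTop, 2 / (ε * η ^ 2) ≤ (n : ℝ) :=
    tendsto_natCast_atTop_atTop.eventually_ge_atTop _
  filter_upwards [hmodel, u1, u2, n1, n2, hdet, eventually_gt_atTop 0]
    with n hM u1 u2 n1 n2 hdet hn
  have hn0 : (0 : ℝ) < n := by exact_mod_cast hn
  have n1' : 2 ≤ η ^ 2 * n := by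
    rw [div_le_iff₀ (by positivity)] at n1; linarith
  have bound := class_bound hκ0 hκ1 u1 u2 hM (hcls n η hη0 hη1 hη2) hη0 K hK0 n1'
  refine (measure_mono ?_).trans (bound.trans (ENNReal.ofReal_le_ofReal ?_))
  · intro ω hω hgood
    exact hω (hdet _ _ hgood.1 hgood.2)
  · have b1 : 1 / (η ^ 2 * n) ≤ ε / 2 := by
      rw [div_le_iff₀ (by positivity)] at n2
      rw [div_le_iff₀ (by positivity)]
      nlinarith
    have b2 : 2 / K ^ 2 = ε / 2 := by rw [hK2]; field_simp; norm_num
    linarith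

/-- From a class bound in probability to convergence in probability to zero. -/
lemma to_tendsto {Ω : ℕ → Type} [mΩ : ∀ n, MeasurableSpace (Ω n)] {P : ∀ n, Measure (Ω n)}
    {S : ∀ n, Set (Ω n)}
    (h : ∀ ε > (0 : ℝ), ∀ᶠ n : ℕ in atTop, P n (S n) ≤ ENNReal.ofReal ε) :
    Tendsto (fun n => P n (S n)) atTop (nhds 0) := by
  rw [ENNReal.tendsto_nhds_zero]
  intro ε hε
  obtain ⟨r, hr0, hr⟩ := ENNReal.lt_iff_exists_nnreal_btwn.1 hε
  have hr0' : (0 : ℝ) < r := by exact_mod_cast hr0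
  filter_upwards [h r hr0'] with n hn
  refine hn.trans ?_
  rw [ENNReal.ofReal_coe_nnreal]
  exact hr.le

/-- Two-class difference, scaled by `√n`. -/
lemma diff_small {C ε : ℝ} (hε : 0 < ε) (hC : 0 < C) :
    ∀ᶠ n : ℕ in atTop, ∀ x y a m : ℝ, (n : ℝ) * |x - (a + m / Real.sqrt n)| ≤ C →
      (n : ℝ) * |y - a| ≤ C → |Real.sqrt n * (x - y) - m| ≤ ε := by
  have e1 : ∀ᶠ n : ℕ in atTop, 2 * C / ε ≤ Real.sqrt n :=
    (Real.tendsto_sqrt_atTop.comp tendsto_natCast_atTop_atTop).eventually_ge_atTop _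
  filter_upwards [e1, eventually_gt_atTop 0] with n e1 hn x y a m h1 h2
  have hn0 : (0 : ℝ) < n := by exact_mod_cast hn
  set s := Real.sqrt n with hs
  have hs0 : 0 < s := Real.sqrt_pos.2 hn0
  have hss : (n : ℝ) = s * s := (Real.mul_self_sqrt hn0.le).symm
  rw [hss] at h1 h2
  have e : s * (x - y) - m = s * ((x - (a + m / s)) - (y - a)) := by field_simp; ring
  rw [e, abs_mul, abs_of_pos hs0]
  have := abs_sub (x - (a + m / s)) (y - a)
  rw [div_le_iff₀ hε] at e1
  have : s * (s * |(x - (a + m / s)) - (y - a)|) ≤ s * ε := by nlinarith [mul_pos hs0 hs0]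
  exact le_of_mul_le_mul_left this hs0

theorem statement_12
    (κ q β μ₁ μ₂ γ₁ γ₂ : ℝ)
    (hκ0 : 0 < κ) (hκ1 : κ < 1) (hq0 : 0 < q) (hq1 : q < 1)
    (hβ0 : 0 < β) (hβ1 : β < 1)
    (Ω : ℕ → Type) [mΩ : ∀ n, MeasurableSpace (Ω n)] (P : ∀ n, Measure (Ω n))
    (c : ∀ n, Ω n → Fin n → Bool)
    (A Y Y' : ∀ n, Ω n → Fin n → Fin n → Bool)
    (hmodel : ∀ᶠ n : ℕ in atTop,
      IsObsSBM (P n) n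
        (sbmB (q + μ₁ / Real.sqrt n) (q + μ₂ / Real.sqrt n) q)
        (sbmB (β - γ₁ / Real.sqrt n) (β - γ₂ / Real.sqrt n) β)
        κ (c n) (A n) (Y n) (Y' n)) :
    -- |β̂_b − β| = O_P(n⁻¹)
    (∀ ε > (0:ℝ), ∃ C > (0:ℝ), ∀ᶠ n : ℕ in atTop,
      (P n {ω | C < (n : ℝ) *
          |betaHat (between (c n ω)) (Y n ω) (Y' n ω) - β|}).toReal ≤ ε) ∧
    -- |β̂₁ − (β − γ₁/√n)| = O_P(n⁻¹)
    (∀ ε > (0:ℝ), ∃ C > (0:ℝ), ∀ᶠ n : ℕ in atTop,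
      (P n {ω | C < (n : ℝ) *
          |betaHat (within1 (c n ω)) (Y n ω) (Y' n ω) -
            (β - γ₁ / Real.sqrt n)|}).toReal ≤ ε) ∧
    -- |β̂₂ − (β − γ₂/√n)| = O_P(n⁻¹)
    (∀ ε > (0:ℝ), ∃ C > (0:ℝ), ∀ᶠ n : ℕ in atTop,
      (P n {ω | C < (n : ℝ) *
          |betaHat (within2 (c n ω)) (Y n ω) (Y' n ω) -
            (β - γ₂ / Real.sqrt n)|}).toReal ≤ ε) ∧
    -- γ̂₁ →ᵖ γ₁ and γ̂₂ →ᵖ γ₂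
    (∀ ε > (0:ℝ),
      Tendsto (fun n => P n {ω |
          ε < |gammaHat1 (c n ω) (Y n ω) (Y' n ω) - γ₁|}) atTop (nhds 0) ∧
      Tendsto (fun n => P n {ω |
          ε < |gammaHat2 (c n ω) (Y n ω) (Y' n ω) - γ₂|}) atTop (nhds 0)) ∧
    -- q̂ = û₁,b/(1 − β̂_b) →ᵖ q
    (∀ ε > (0:ℝ),
      Tendsto (fun n => P n {ω |
          ε < |u1hat (between (c n ω)) (Y n ω) /
                (1 - betaHat (between (c n ω)) (Y n ω) (Y' n ω)) - q|})
        atTop (nhds 0)) ∧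
    -- μ̂₁ →ᵖ μ₁ and μ̂₂ →ᵖ μ₂
    (∀ ε > (0:ℝ),
      Tendsto (fun n => P n {ω |
          ε < |muHat1 (c n ω) (Y n ω) (Y' n ω) - μ₁|}) atTop (nhds 0) ∧
      Tendsto (fun n => P n {ω |
          ε < |muHat2 (c n ω) (Y n ω) (Y' n ω) - μ₂|}) atTop (nhds 0)) := by
  have hb : ∀ ε > (0 : ℝ), _ := class_main (m := 0) (g := 0) (cls := fun n => between)
    hκ0 hκ1 hq0 hq1 hβ0 hβ1 hmodel
    (fun n η a1 a2 a3 => by simpa using good_between a1 a2 a3)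
  have h1 : ∀ ε > (0 : ℝ), _ := class_main (m := μ₁) (g := γ₁) (cls := fun n => within1)
    hκ0 hκ1 hq0 hq1 hβ0 hβ1 hmodel (fun n η a1 a2 a3 => good_within1 a1 a2 a3)
  have h2 : ∀ ε > (0 : ℝ), _ := class_main (m := μ₂) (g := γ₂) (cls := fun n => within2)
    hκ0 hκ1 hq0 hq1 hβ0 hβ1 hmodel (fun n η a1 a2 a3 => good_within2 a1 a2 a3)
  simp only [zero_div, add_zero, sub_zero] at hb
  have pair : ∀ (S : ∀ n, Set (Ω n)) (cls : ∀ n, (Fin n → Bool) → Fin n → Fin n → Bool)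
      (m g : ℝ)
      (_ : ∀ ε > (0 : ℝ), ∃ C > (0 : ℝ), ∀ᶠ n : ℕ in atTop,
        P n {ω | ¬ ClsOK (cls n (c n ω)) (Y n ω) (Y' n ω)
          (q + m / Real.sqrt n) (β - g / Real.sqrt n) C} ≤ ENNReal.ofReal ε)
      (_ : ∀ C > (0 : ℝ), ∀ᶠ n : ℕ in atTop, ∀ ω,
        ClsOK (between (c n ω)) (Y n ω) (Y' n ω) q β C →
        ClsOK (cls n (c n ω)) (Y n ω) (Y' n ω)
          (q + m / Real.sqrt n) (β - g / Real.sqrt n) C → ω ∉ S n),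
      Tendsto (fun n => P n (S n)) atTop (nhds 0) := by
    intro S cls m g hcl hS
    apply to_tendsto
    intro ε hε
    obtain ⟨C1, hC1, e1⟩ := hb (ε / 2) (by positivity)
    obtain ⟨C2, hC2, e2⟩ := hcl (ε / 2) (by positivity)
    filter_upwards [e1, e2, hS (max C1 C2) (lt_max_of_lt_left hC1)] with n e1 e2 e3
    have hsub : S n ⊆ {ω | ¬ ClsOK (between (c n ω)) (Y n ω) (Y' n ω) q β C1} ∪
        {ω | ¬ ClsOK (cls n (c n ω)) (Y n ω) (Y' n ω)
          (q + m / Real.sqrt n) (β - g / Real.sqrt n) C2} := by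
      intro ω hω
      by_contra hcon
      simp only [Set.mem_union, Set.mem_ofPred_eq, not_or, not_not] at hcon
      obtain ⟨⟨k1, k2⟩, k3, k4⟩ := hcon
      exact e3 ω ⟨k1.trans (le_max_left _ _), k2.trans (le_max_left _ _)⟩
        ⟨k3.trans (le_max_right _ _), k4.trans (le_max_right _ _)⟩ hω
    calc P n (S n) ≤ _ := (measure_mono hsub).trans (measure_union_le _ _)
      _ ≤ ENNReal.ofReal (ε / 2) + ENNReal.ofReal (ε / 2) := add_le_add e1 e2
      _ = ENNReal.ofReal ε := by
        rw [← ENNReal.ofReal_add (by positivity) (by positivity), add_halves]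
  have gam : ∀ (x y g s : ℝ), |s * (x - y) - -g| = |s * (y - x) - g| := by
    intro x y g s
    rw [← abs_neg]
    congr 1
    ring
  refine ⟨?_, ?_, ?_, ?_, ?_, ?_⟩
  · intro ε hε
    obtain ⟨C, hC, e⟩ := hb ε hε
    refine ⟨C, hC, ?_⟩
    filter_upwards [e] with n e
    refine ENNReal.toReal_le_of_le_ofReal hε.le ((measure_mono ?_).trans e)
    intro ω hω hok
    exact absurd hok.1 (not_le.2 hω)
  · intro ε hε
    obtain ⟨C, hC, e⟩ := h1 ε hε
    refine ⟨C, hC, ?_⟩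
    filter_upwards [e] with n e
    refine ENNReal.toReal_le_of_le_ofReal hε.le ((measure_mono ?_).trans e)
    intro ω hω hok
    exact absurd hok.1 (not_le.2 hω)
  · intro ε hε
    obtain ⟨C, hC, e⟩ := h2 ε hε
    refine ⟨C, hC, ?_⟩
    filter_upwards [e] with n e
    refine ENNReal.toReal_le_of_le_ofReal hε.le ((measure_mono ?_).trans e)
    intro ω hω hok
    exact absurd hok.1 (not_le.2 hω)
  · intro ε hε
    constructor
    · refine pair _ (fun n => within1) μ₁ γ₁ h1 fun C hC => ?_
      filter_upwards [diff_small hε hC] with n hd ω k1 k2 hω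
      refine absurd (hd (betaHat (within1 (c n ω)) (Y n ω) (Y' n ω)) _ β (-γ₁) ?_ k1.1) (not_le.2 ?_)
      · rw [neg_div, ← sub_eq_add_neg]; exact k2.1
      · rw [gam]; exact hω
    · refine pair _ (fun n => within2) μ₂ γ₂ h2 fun C hC => ?_
      filter_upwards [diff_small hε hC] with n hd ω k1 k2 hω
      refine absurd (hd (betaHat (within2 (c n ω)) (Y n ω) (Y' n ω)) _ β (-γ₂) ?_ k1.1) (not_le.2 ?_)
      · rw [neg_div, ← sub_eq_add_neg]; exact k2.1
      · rw [gam]; exact hω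
  · intro ε hε
    refine pair _ (fun n => within1) μ₁ γ₁ h1 fun C hC => ?_
    have e1 : ∀ᶠ n : ℕ in atTop, C / ε ≤ (n : ℝ) :=
      tendsto_natCast_atTop_atTop.eventually_ge_atTop _
    filter_upwards [e1, eventually_gt_atTop 0] with n e1 hn ω k1 _ hω
    have hn0 : (0 : ℝ) < n := by exact_mod_cast hn
    rw [div_le_iff₀ hε] at e1
    have := mul_lt_mul_of_pos_left hω hn0
    linarith [k1.2]
  · intro ε hε
    constructor
    · refine pair _ (fun n => within1) μ₁ γ₁ h1 fun C hC => ?_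
      filter_upwards [diff_small hε hC] with n hd ω k1 k2 hω
      exact absurd (hd _ _ q μ₁ k2.2 k1.2) (not_le.2 hω)
    · refine pair _ (fun n => within2) μ₂ γ₂ h2 fun C hC => ?_
      filter_upwards [diff_small hε hC] with n hd ω k1 k2 hω
      exact absurd (hd _ _ q μ₂ k2.2 k1.2) (not_le.2 hω)

end
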